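/- Let X be a positive random variable with E[X] = 1, E[X log X] < ∞, and suppose X is not almost surely constant. Define f(α) = α·E[X^α log X]/E[X^α] − log E[X^α] for α ∈ [0,1]. Then f is continuous on [0,1] and strictly increasing on [0,1]. -/

import Mathlib

open MeasureTheory Real

/-!
Write `Y = log X`, let `K` be the cumulant generating function of `Y`, and let `P_t` be the tilted
law with density `exp (t * Y - K t)`. Inside the domain of `K` we have `f t = t * K' t - K t`, which
is the relative entropy of `P_t` with respect to `P`, so `f' t = t * K'' t = t * Var[Y; P_t]`, and
the variance is positive because `Y` is not constant.

At the endpoints `K` need not be differentiable (`log X` need not be integrable), so continuity on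
the closed interval comes from dominated convergence instead. The factor `t` is kept inside the
integral: `t * y * exp (t * y)` is bounded for `y ≤ 0` uniformly in `t`, while `y * exp (t * y)` is
not.
-/

section TiltedEntropy

open ProbabilityTheory Set

lemma exp_mul_le_exp_add_abs_mul_exp {t b : ℝ} (ht : t ∈ Icc 0 b) (y : ℝ) :
    exp (t * y) ≤ exp b + |y * exp (b * y)| := by
  obtain ⟨ht0, htb⟩ := ht
  rcases le_total y 1 with hy | hy
  · have : exp (t * y) ≤ exp b := exp_le_exp.2 (by nlinarith)
    linarith [abs_nonneg (y * exp (b * y))]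
  · calc exp (t * y) ≤ exp (b * y) := by gcongr
      _ ≤ y * exp (b * y) := le_mul_of_one_le_left (exp_pos _).le hy
      _ ≤ |y * exp (b * y)| := le_abs_self _
      _ ≤ exp b + |y * exp (b * y)| := le_add_of_nonneg_left (exp_pos b).le

lemma abs_mul_exp_le_one_of_nonpos {u : ℝ} (hu : u ≤ 0) : |u * exp u| ≤ 1 := by
  rw [abs_mul, abs_of_nonpos hu, abs_exp]
  calc -u * exp u ≤ exp (-u) * exp u := by gcongr; linarith [add_one_le_exp (-u)]
    _ = 1 := by rw [← exp_add, neg_add_cancel, exp_zero]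

lemma abs_mul_mul_exp_le {t b : ℝ} (ht : t ∈ Icc 0 b) (y : ℝ) :
    |t * (y * exp (t * y))| ≤ 1 + b * |y * exp (b * y)| := by
  obtain ⟨ht0, htb⟩ := ht
  have hb : 0 ≤ b := ht0.trans htb
  rcases le_total y 0 with hy | hy
  · calc |t * (y * exp (t * y))| = |t * y * exp (t * y)| := by rw [mul_assoc]
      _ ≤ 1 := abs_mul_exp_le_one_of_nonpos (mul_nonpos_of_nonneg_of_nonpos ht0 hy)
      _ ≤ 1 + b * |y * exp (b * y)| := le_add_of_nonneg_right (by positivity)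
  · rw [abs_of_nonneg (by positivity), abs_of_nonneg (by positivity)]
    calc t * (y * exp (t * y)) ≤ b * (y * exp (b * y)) := by gcongr
      _ ≤ 1 + b * (y * exp (b * y)) := le_add_of_nonneg_left zero_le_one

variable {Ω : Type*} [MeasurableSpace Ω] {μ : Measure Ω} {X Y : Ω → ℝ} {t b : ℝ}

/-- The relative entropy of the exponentially tilted law `μ.tilted (t * Y ·)` with respect to the
probability measure `μ`, as a function of the tilting parameter `t`. The mean of `Y` under the
tilted law is written as a quotient of `μ`-integrals; where `Y * exp (t * Y)` is not integrable,
this quotient is `0`. -/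
noncomputable def tiltedEntropy (Y : Ω → ℝ) (μ : Measure Ω) (t : ℝ) : ℝ :=
  t * (μ[fun ω ↦ Y ω * exp (t * Y ω)] / mgf Y μ t) - cgf Y μ t

section Continuity

variable [IsFiniteMeasure μ]

lemma integrable_exp_add_abs_mul_exp (hYb : Integrable (fun ω ↦ Y ω * exp (b * Y ω)) μ) :
    Integrable (fun ω ↦ exp b + |Y ω * exp (b * Y ω)|) μ :=
  (integrable_const _).add hYb.abs

lemma Icc_subset_integrableExpSet (hY : AEMeasurable Y μ)
    (hYb : Integrable (fun ω ↦ Y ω * exp (b * Y ω)) μ) :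
    Icc 0 b ⊆ integrableExpSet Y μ := fun t ht ↦
  (integrable_exp_add_abs_mul_exp hYb).mono' (by fun_prop) <| .of_forall fun ω ↦ by
    simpa only [norm_eq_abs, abs_exp] using exp_mul_le_exp_add_abs_mul_exp ht (Y ω)

lemma continuousOn_mgf_Icc (hY : AEMeasurable Y μ)
    (hYb : Integrable (fun ω ↦ Y ω * exp (b * Y ω)) μ) :
    ContinuousOn (mgf Y μ) (Icc 0 b) := by
  refine continuousOn_of_dominated (fun t _ ↦ by fun_prop) (fun t ht ↦ .of_forall fun ω ↦ ?_)
    (integrable_exp_add_abs_mul_exp hYb) (.of_forall fun ω ↦ by fun_prop)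
  simpa only [norm_eq_abs, abs_exp] using exp_mul_le_exp_add_abs_mul_exp ht (Y ω)

lemma continuousOn_mul_integral_mul_exp (hY : AEMeasurable Y μ)
    (hYb : Integrable (fun ω ↦ Y ω * exp (b * Y ω)) μ) :
    ContinuousOn (fun t ↦ t * μ[fun ω ↦ Y ω * exp (t * Y ω)]) (Icc 0 b) := by
  simp only [← integral_const_mul]
  exact continuousOn_of_dominated (fun t _ ↦ by fun_prop)
    (fun t ht ↦ .of_forall fun ω ↦ abs_mul_mul_exp_le ht (Y ω))
    ((integrable_const 1).add (hYb.abs.const_mul b)) (.of_forall fun ω ↦ by fun_prop)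

lemma continuousOn_tiltedEntropy (hY : AEMeasurable Y μ)
    (hYb : Integrable (fun ω ↦ Y ω * exp (b * Y ω)) μ) :
    ContinuousOn (tiltedEntropy Y μ) (Icc 0 b) := by
  rcases eq_or_ne μ 0 with rfl | hμ
  · exact continuousOn_const.congr fun t _ ↦ show tiltedEntropy Y 0 t = 0 by simp [tiltedEntropy]
  have mgf_ne_zero : ∀ t ∈ Icc 0 b, mgf Y μ t ≠ 0 := fun t ht ↦
    (mgf_pos' hμ (Icc_subset_integrableExpSet hY hYb ht)).ne'
  have hmgf := continuousOn_mgf_Icc hY hYb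
  have hmean := (continuousOn_mul_integral_mul_exp hY hYb).div hmgf mgf_ne_zero
  refine (hmean.sub (hmgf.log mgf_ne_zero)).congr fun t _ ↦ ?_
  simp only [tiltedEntropy, cgf, mul_div_assoc, Pi.sub_apply, Pi.div_apply]

end Continuity

lemma hasDerivAt_tiltedEntropy (ht : t ∈ interior (integrableExpSet Y μ)) :
    HasDerivAt (tiltedEntropy Y μ) (t * Var[Y; μ.tilted (t * Y ·)]) t := by
  have hcgf : AnalyticAt ℝ (cgf Y μ) t := analyticAt_cgf ht
  have hcgf' : HasDerivAt (deriv (cgf Y μ)) (Var[Y; μ.tilted (t * Y ·)]) t := by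
    rw [variance_tilted_mul ht, iteratedDeriv_succ, iteratedDeriv_one]
    exact hcgf.deriv.differentiableAt.hasDerivAt
  have eq_legendre : tiltedEntropy Y μ =ᶠ[nhds t] fun s ↦ s * deriv (cgf Y μ) s - cgf Y μ s := by
    filter_upwards [isOpen_interior.mem_nhds ht] with s hs
    rw [tiltedEntropy, deriv_cgf hs]
  have hlegendre := ((hasDerivAt_id' t).mul hcgf').sub hcgf.differentiableAt.hasDerivAt
  exact (hlegendre.congr_of_eventuallyEq eq_legendre).congr_deriv (by ring)

lemma variance_tilted_mul_pos (ht : t ∈ interior (integrableExpSet Y μ))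
    (hY : ¬ ∃ c : ℝ, ∀ᵐ ω ∂μ, Y ω = c) :
    0 < Var[Y; μ.tilted (t * Y ·)] := by
  have hexp : Integrable (fun ω ↦ exp (t * Y ω)) μ :=
    integrable_of_mem_integrableExpSet (interior_subset ht)
  refine (variance_nonneg _ _).lt_of_ne' fun hvar ↦ hY ⟨(μ.tilted (t * Y ·))[Y], ?_⟩
  exact (absolutelyContinuous_tilted hexp).ae_le
    (ae_eq_integral_of_variance_eq_zero (memLp_tilted_mul ht 2) hvar)

lemma strictMonoOn_tiltedEntropy [IsFiniteMeasure μ] (hY : AEMeasurable Y μ)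
    (hYb : Integrable (fun ω ↦ Y ω * exp (b * Y ω)) μ) (hYc : ¬ ∃ c : ℝ, ∀ᵐ ω ∂μ, Y ω = c) :
    StrictMonoOn (tiltedEntropy Y μ) (Icc 0 b) := by
  refine strictMonoOn_of_deriv_pos (convex_Icc 0 b) (continuousOn_tiltedEntropy hY hYb)
    fun t ht ↦ ?_
  have ht_exp := interior_mono (Icc_subset_integrableExpSet hY hYb) ht
  have ht_pos : 0 < t := (interior_Icc (a := 0) (b := b) ▸ ht).1
  rw [(hasDerivAt_tiltedEntropy ht_exp).deriv]
  exact mul_pos ht_pos (variance_tilted_mul_pos ht_exp hYc)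

lemma ae_rpow_mul_log_eq (hX : ∀ᵐ ω ∂μ, 0 < X ω) (α : ℝ) :
    (fun ω ↦ X ω ^ α * log (X ω)) =ᵐ[μ] fun ω ↦ log (X ω) * exp (α * log (X ω)) := by
  filter_upwards [hX] with ω hω
  rw [rpow_def_of_pos hω, mul_comm α, mul_comm]

lemma tiltedEntropy_log (hX : ∀ᵐ ω ∂μ, 0 < X ω) (α : ℝ) :
    tiltedEntropy (fun ω ↦ log (X ω)) μ α =
      α * ((∫ ω, X ω ^ α * log (X ω) ∂μ) / ∫ ω, X ω ^ α ∂μ) - log (∫ ω, X ω ^ α ∂μ) := by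
  have hmgf : ∫ ω, X ω ^ α ∂μ = mgf (fun ω ↦ log (X ω)) μ α := integral_congr_ae <| by
    filter_upwards [hX] with ω hω
    rw [rpow_def_of_pos hω, mul_comm]
  rw [tiltedEntropy, cgf, hmgf, integral_congr_ae (ae_rpow_mul_log_eq hX α)]

end TiltedEntropy

theorem tilted_entropy_continuous_strictMono_general
    {Ω : Type*} [MeasurableSpace Ω] {μ : Measure Ω} [IsFiniteMeasure μ] {X : Ω → ℝ} {b : ℝ}
    (hX : AEMeasurable X μ) (hXpos : ∀ᵐ ω ∂μ, 0 < X ω)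
    (hXb : Integrable (fun ω ↦ X ω ^ b * log (X ω)) μ)
    (hXnonconst : ¬ ∃ c : ℝ, ∀ᵐ ω ∂μ, X ω = c)
    {f : ℝ → ℝ}
    (hf : ∀ α, f α = α * ((∫ ω, X ω ^ α * log (X ω) ∂μ) / ∫ ω, X ω ^ α ∂μ)
      - log (∫ ω, X ω ^ α ∂μ)) :
    ContinuousOn f (Set.Icc 0 b) ∧ StrictMonoOn f (Set.Icc 0 b) := by
  have hf_eq : f = tiltedEntropy (fun ω ↦ log (X ω)) μ :=
    funext fun α ↦ (hf α).trans (tiltedEntropy_log hXpos α).symm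
  have hlog_int := hXb.congr (ae_rpow_mul_log_eq hXpos b)
  have hlog_nonconst : ¬ ∃ c : ℝ, ∀ᵐ ω ∂μ, log (X ω) = c := by
    rintro ⟨c, hc⟩
    refine hXnonconst ⟨exp c, ?_⟩
    filter_upwards [hXpos, hc] with ω hω hcω
    rw [← hcω, exp_log hω]
  rw [hf_eq]
  exact ⟨continuousOn_tiltedEntropy hX.log hlog_int,
    strictMonoOn_tiltedEntropy hX.log hlog_int hlog_nonconst⟩

/-- For a positive random variable `X` with `E[X] = 1`,
`E[X log X] < ∞`, and `X` not almost surely constant, the function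
`f(α) = α·E[X^α log X]/E[X^α] − log E[X^α]` is continuous and strictly increasing
on `[0,1]`. -/
theorem tilted_entropy_continuous_strictMono
    {Ω : Type*} [MeasurableSpace Ω] (P : Measure Ω) [IsProbabilityMeasure P]
    (X : Ω → ℝ) (hXmeas : Measurable X) (hXpos : ∀ ω, 0 < X ω)
    (hXmean : ∫ ω, X ω ∂P = 1)
    (hXlogint : Integrable (fun ω => X ω * Real.log (X ω)) P)
    (hXnonconst : ¬ ∃ c : ℝ, ∀ᵐ ω ∂P, X ω = c)
    (f : ℝ → ℝ)
    (hf : ∀ α, f α = α * ((∫ ω, X ω ^ α * Real.log (X ω) ∂P) / (∫ ω, X ω ^ α ∂P))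
        - Real.log (∫ ω, X ω ^ α ∂P)) :
    ContinuousOn f (Set.Icc (0 : ℝ) 1) ∧ StrictMonoOn f (Set.Icc (0 : ℝ) 1) :=
  tilted_entropy_continuous_strictMono_general hXmeas.aemeasurable (.of_forall hXpos)
    (by simpa only [rpow_one] using hXlogint) hXnonconst hf
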